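/- Let F ⊆ ℝ × ℝ be a compact convex set and c = (c₁, c₂) ∈ ℝ × ℝ, and suppose there exists p ∈ F with c₁ < p₁ and c₂ < p₂. If q ∈ F with q₁ ≥ c₁ and q₂ ≥ c₂ maximizes the Nash product (i.e. (r₁ − c₁)(r₂ − c₂) ≤ (q₁ − c₁)(q₂ − c₂) for every r ∈ F with r₁ ≥ c₁ and r₂ ≥ c₂), then q is Pareto optimal in F: there is no r ∈ F with r₁ > q₁ and r₂ > q₂. -/

import Mathlib

/- Unlike in `Finset.prod_lt_prod_of_nonempty`, the smaller factors may vanish: a feasible point may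
give some player exactly the disagreement payoff. -/
theorem prod_lt_prod_of_nonneg {ι R : Type*} [CommMonoidWithZero R] [PartialOrder R]
    [ZeroLEOneClass R] [PosMulStrictMono R] {s : Finset ι} {f g : ι → R} (hs : s.Nonempty)
    (hf : ∀ i ∈ s, 0 ≤ f i) (hfg : ∀ i ∈ s, f i < g i) : ∏ i ∈ s, f i < ∏ i ∈ s, g i := by
  have := posMulStrictMono_iff_mulPosStrictMono.1 ‹PosMulStrictMono R›
  induction hs using Finset.Nonempty.cons_induction with
  | singleton i => simpa using hfg
  | cons i s _ _ ih =>
    rw [Finset.forall_mem_cons] at hf hfg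
    simpa only [Finset.prod_cons] using
      mul_lt_mul'' hfg.1 (ih hf.2 hfg.2) hf.1 (Finset.prod_nonneg hf.2)

section NashProduct

variable {ι R : Type*} [Fintype ι] [CommRing R]

/-- The Nash product of the payoff vector `x` relative to the disagreement point `c`, for any finite
set `ι` of players. -/
def nashProduct (c x : ι → R) : R :=
  ∏ i, (x i - c i)

variable [PartialOrder R] [IsStrictOrderedRing R] [Nonempty ι]

theorem nashProduct_lt_nashProduct {c x y : ι → R} (hcx : c ≤ x) (hxy : StrongLT x y) :
    nashProduct c x < nashProduct c y :=
  prod_lt_prod_of_nonneg Finset.univ_nonempty (fun i _ ↦ sub_nonneg.2 (hcx i))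
    fun i _ ↦ sub_lt_sub_right (hxy i) (c i)

theorem nash_solution_pareto_optimal_general {F : Set (ι → R)} {c q : ι → R} (hcq : c ≤ q)
    (hqmax : IsMaxOn (nashProduct c) (F ∩ Set.Ici c) q) : ¬ ∃ r ∈ F, StrongLT q r := by
  rintro ⟨r, hrF, hqr⟩
  have hr_le : nashProduct c r ≤ nashProduct c q := hqmax ⟨hrF, hcq.trans hqr.le⟩
  exact hr_le.not_gt (nashProduct_lt_nashProduct hcq hqr)

end NashProduct

/-- Pareto optimality of the Nash bargaining solution: any individually rational
point of a compact convex feasibility set `F` maximizing the Nash product (relative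
to a disagreement point `c` strictly dominated by some point of `F`) is Pareto
optimal in `F`. -/
theorem nash_solution_pareto_optimal (F : Set (ℝ × ℝ)) (hFcomp : IsCompact F)
    (hFconv : Convex ℝ F) (c : ℝ × ℝ) (hdom : ∃ p ∈ F, c.1 < p.1 ∧ c.2 < p.2)
    (q : ℝ × ℝ) (hqF : q ∈ F) (hq1 : c.1 ≤ q.1) (hq2 : c.2 ≤ q.2)
    (hqmax : ∀ r ∈ F, c.1 ≤ r.1 → c.2 ≤ r.2 →
      (r.1 - c.1) * (r.2 - c.2) ≤ (q.1 - c.1) * (q.2 - c.2)) :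
    ¬ ∃ r ∈ F, q.1 < r.1 ∧ q.2 < r.2 := by
  rintro ⟨r, hrF, hr1, hr2⟩
  have hmax : IsMaxOn (nashProduct ![c.1, c.2])
      (finTwoArrowEquiv ℝ ⁻¹' F ∩ Set.Ici ![c.1, c.2]) ![q.1, q.2] := fun x ⟨hxF, hcx⟩ ↦ by
    simpa [nashProduct, Fin.prod_univ_two] using hqmax (x 0, x 1) hxF (hcx 0) (hcx 1)
  exact nash_solution_pareto_optimal_general (Fin.forall_fin_two.2 ⟨hq1, hq2⟩) hmax
    ⟨![r.1, r.2], hrF, Fin.forall_fin_two.2 ⟨hr1, hr2⟩⟩
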